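/- arXiv:1509.03745 — 3 statements merged into one kernel-verified Lean document; each statement's English description precedes it below -/
import Mathlib

section
/- Let Q be as in the context. Then there exists a unique pair of real numbers (a₀, b₀) with a₀ < b₀ such that φ(a₀,b₀) = 0 and ψ(a₀,b₀) = 0. -/
open MeasureTheory intervalIntegral

/-- `φ(a,b) = ∫₀¹ Q'((1−t)b + t·a)/√(t(1−t)) dt`. -/
noncomputable def phi (Q : Polynomial ℝ) (a b : ℝ) : ℝ :=
  ∫ t in (0:ℝ)..1, Q.derivative.eval ((1 - t) * b + t * a) / Real.sqrt (t * (1 - t))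

/-- `ψ(a,b) = (b−a)·∫₀¹ Q'((1−t)b + t·a)·√((1−t)/t) dt − 2π`. -/
noncomputable def psi (Q : Polynomial ℝ) (a b : ℝ) : ℝ :=
  (b - a) * (∫ t in (0:ℝ)..1, Q.derivative.eval ((1 - t) * b + t * a) * Real.sqrt ((1 - t) / t))
    - 2 * Real.pi


lemma cov (g : ℝ → ℝ) : ∫ t in (0:ℝ)..1, g t
    = ∫ θ in (0:ℝ)..Real.pi, (Real.sin θ / 2) * g ((1 - Real.cos θ) / 2) := by
  have himg : (fun θ : ℝ => (1 - Real.cos θ) / 2) '' Set.Ioo 0 Real.pi = Set.Ioo 0 1 := by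
    ext t
    constructor
    · rintro ⟨θ, ⟨h0, h1⟩, rfl⟩
      have hs := Real.sin_pos_of_pos_of_lt_pi h0 h1
      have := Real.sin_sq_add_cos_sq θ
      constructor <;> dsimp only <;> nlinarith
    · rintro ⟨h0, h1⟩
      refine ⟨Real.arccos (1 - 2 * t), ⟨?_, ?_⟩, ?_⟩
      · rw [Real.arccos_pos]; linarith
      · apply lt_of_le_of_ne (Real.arccos_le_pi _)
        intro h
        rw [Real.arccos_eq_pi] at h
        linarith
      · dsimp only
        rw [Real.cos_arccos (by linarith) (by linarith)]; ring
  have hd : ∀ x ∈ Set.Ioo 0 Real.pi, HasDerivWithinAt (fun θ : ℝ => (1 - Real.cos θ) / 2)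
      (Real.sin x / 2) (Set.Ioo 0 Real.pi) x := by
    intro x _
    have := (((Real.hasDerivAt_cos x).const_sub 1).div_const 2).hasDerivWithinAt (s := Set.Ioo 0 Real.pi)
    simpa using this
  have hinj : Set.InjOn (fun θ : ℝ => (1 - Real.cos θ) / 2) (Set.Ioo 0 Real.pi) := by
    intro x hx y hy h
    exact Real.injOn_cos ⟨hx.1.le, hx.2.le⟩ ⟨hy.1.le, hy.2.le⟩ (by dsimp only at h; linarith)
  have := integral_image_eq_integral_abs_deriv_smul measurableSet_Ioo hd hinj g
  rw [himg] at this
  rw [intervalIntegral.integral_of_le zero_le_one, intervalIntegral.integral_of_le Real.pi_pos.le,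
    integral_Ioc_eq_integral_Ioo, integral_Ioc_eq_integral_Ioo, this]
  apply setIntegral_congr_fun measurableSet_Ioo
  intro x hx
  have hs := Real.sin_pos_of_pos_of_lt_pi hx.1 hx.2
  simp only [smul_eq_mul]
  rw [abs_of_pos (by positivity)]

lemma congr_Ioo {f g : ℝ → ℝ} (h : ∀ x ∈ Set.Ioo 0 Real.pi, f x = g x) :
    ∫ θ in (0:ℝ)..Real.pi, f θ = ∫ θ in (0:ℝ)..Real.pi, g θ := by
  rw [intervalIntegral.integral_of_le Real.pi_pos.le, intervalIntegral.integral_of_le Real.pi_pos.le,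
    integral_Ioc_eq_integral_Ioo, integral_Ioc_eq_integral_Ioo]
  exact setIntegral_congr_fun measurableSet_Ioo h

lemma phi_eq (Q : Polynomial ℝ) (c r : ℝ) : phi Q (c - r) (c + r)
    = ∫ θ in (0:ℝ)..Real.pi, Q.derivative.eval (c + r * Real.cos θ) := by
  unfold phi
  rw [cov]
  apply congr_Ioo
  intro x hx
  have hs := Real.sin_pos_of_pos_of_lt_pi hx.1 hx.2
  have h1 : Real.sqrt ((1 - Real.cos x) / 2 * (1 - (1 - Real.cos x) / 2)) = Real.sin x / 2 := by
    rw [Real.sqrt_eq_iff_mul_self_eq_of_pos (by positivity)]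
    nlinarith [Real.sin_sq_add_cos_sq x]
  have h2 : (1 - (1 - Real.cos x) / 2) * (c + r) + (1 - Real.cos x) / 2 * (c - r)
    = c + r * Real.cos x := by ring
  rw [h1, h2]
  field_simp

lemma psi_eq (Q : Polynomial ℝ) (c r : ℝ) : psi Q (c - r) (c + r)
    = r * phi Q (c - r) (c + r)
      + r * (∫ θ in (0:ℝ)..Real.pi, Q.derivative.eval (c + r * Real.cos θ) * Real.cos θ)
      - 2 * Real.pi := by
  rw [phi_eq]
  unfold psi
  rw [cov]
  have : ∫ θ in (0:ℝ)..Real.pi, (Real.sin θ / 2) * (Q.derivative.eval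
      ((1 - (1 - Real.cos θ) / 2) * (c + r) + (1 - Real.cos θ) / 2 * (c - r)) *
        Real.sqrt ((1 - (1 - Real.cos θ) / 2) / ((1 - Real.cos θ) / 2)))
      = ∫ θ in (0:ℝ)..Real.pi, (1 / 2) * (Q.derivative.eval (c + r * Real.cos θ)
        + Q.derivative.eval (c + r * Real.cos θ) * Real.cos θ) := by
    apply congr_Ioo
    intro x hx
    have hs := Real.sin_pos_of_pos_of_lt_pi hx.1 hx.2
    have hc : 0 < 1 - Real.cos x := by nlinarith [Real.sin_sq_add_cos_sq x]
    have h1 : Real.sqrt ((1 - (1 - Real.cos x) / 2) / ((1 - Real.cos x) / 2))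
        = Real.sin x / (1 - Real.cos x) := by
      rw [Real.sqrt_eq_iff_mul_self_eq_of_pos (by positivity)]
      field_simp
      nlinarith [Real.sin_sq_add_cos_sq x]
    have h2 : (1 - (1 - Real.cos x) / 2) * (c + r) + (1 - Real.cos x) / 2 * (c - r)
      = c + r * Real.cos x := by ring
    rw [h1, h2]
    field_simp
    have := Real.sin_sq_add_cos_sq x
    have h3 : Real.sin x ^ 2 = (1 - Real.cos x) * (1 + Real.cos x) := by linarith
    rw [h3]
    ring
  rw [this, intervalIntegral.integral_const_mul, intervalIntegral.integral_add]
  · ring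
  · exact (by fun_prop : Continuous fun θ : ℝ => Q.derivative.eval (c + r * Real.cos θ)).intervalIntegrable _ _
  · exact (by fun_prop : Continuous fun θ : ℝ => Q.derivative.eval (c + r * Real.cos θ) * Real.cos θ).intervalIntegrable _ _

lemma strictMono_deriv (Q : Polynomial ℝ) (m : ℕ) (hm : 1 ≤ m)
    (hdeg : Q.natDegree = 2 * m)
    (hconv : ∀ x : ℝ, 0 ≤ Q.derivative.derivative.eval x) :
    StrictMono (fun x : ℝ => Q.derivative.eval x) := by
  have hmono : Monotone (fun x : ℝ => Q.derivative.eval x) := by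
    apply monotone_of_deriv_nonneg Q.derivative.differentiable
    intro x
    rw [Polynomial.deriv]
    exact hconv x
  apply hmono.strictMono_of_injective
  intro x y hxy
  by_contra hne
  wlog h : x < y generalizing x y
  · exact this hxy.symm (Ne.symm hne) (lt_of_le_of_ne (not_lt.1 h) (Ne.symm hne))
  have hz : Q.derivative = Polynomial.C (Q.derivative.eval x) := by
    apply Polynomial.eq_of_infinite_eval_eq
    apply (Set.Icc_infinite h).mono
    intro z hz
    have h1 := hmono hz.1
    have h2 := hmono hz.2
    dsimp only at hxy h1 h2
    simp only [Set.mem_ofPred_eq, Polynomial.eval_C]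
    linarith
  have h3 : Q.derivative.natDegree = 0 := by rw [hz]; simp
  have h5 : Q.derivative.natDegree = Q.natDegree - 1 := by simp [Polynomial.natDegree_derivative]
  omega

lemma lower_half (Q : Polynomial ℝ) (m : ℕ) (hm : 1 ≤ m)
    (hdeg : Q.natDegree = 2 * m) (hlead : 0 < Q.leadingCoeff) :
    ∃ β : ℝ, ∀ x : ℝ, 0 ≤ x → 16 * x - β ≤ Q.eval x := by
  have hlt : (Polynomial.C (16:ℝ) * Polynomial.X).degree < Q.degree := by
    rw [Polynomial.degree_eq_natDegree (p := Q) (by rintro rfl; simp at hlead), hdeg]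
    refine lt_of_le_of_lt (Polynomial.degree_C_mul_X_le _) ?_
    exact_mod_cast (by omega : 1 < 2 * m)
  have ht : Filter.Tendsto (fun x => (Q - Polynomial.C (16:ℝ) * Polynomial.X).eval x)
      Filter.atTop Filter.atTop := by
    apply Polynomial.tendsto_atTop_of_leadingCoeff_nonneg
    · rw [Polynomial.degree_sub_eq_left_of_degree_lt hlt,
        Polynomial.degree_eq_natDegree (p := Q) (by rintro rfl; simp at hlead), hdeg]
      exact_mod_cast (by omega : 0 < 2 * m)
    · rw [Polynomial.leadingCoeff_sub_of_degree_lt hlt]; exact hlead.le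
  obtain ⟨A, hA⟩ := Filter.eventually_atTop.1 (ht.eventually_ge_atTop 0)
  obtain ⟨B, hB⟩ := (isCompact_Icc (a := (0:ℝ)) (b := A)).bddBelow_image
    (f := fun x => (Q - Polynomial.C (16:ℝ) * Polynomial.X).eval x) (by fun_prop)
  refine ⟨max (-B) 0, fun x hx => ?_⟩
  rcases le_total A x with h | h
  · have := hA x h
    simp at this
    linarith [le_max_right (-B) 0]
  · have := hB ⟨x, ⟨hx, h⟩, rfl⟩
    simp at this
    linarith [le_max_left (-B) 0]

lemma lower (Q : Polynomial ℝ) (m : ℕ) (hm : 1 ≤ m)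
    (hdeg : Q.natDegree = 2 * m) (hlead : 0 < Q.leadingCoeff) :
    ∃ β : ℝ, ∀ x : ℝ, 16 * |x| - β ≤ Q.eval x := by
  obtain ⟨β, h⟩ := lower_half Q m hm hdeg hlead
  obtain ⟨γ, h'⟩ := lower_half (Q.comp (-Polynomial.X)) m hm
    (by rw [Polynomial.natDegree_comp]; simp [hdeg])
    (by rw [Polynomial.leadingCoeff_comp (by simp), hdeg]; simp [hlead])
  refine ⟨max β γ, fun x => ?_⟩
  rcases le_total 0 x with hx | hx
  · rw [abs_of_nonneg hx]
    linarith [h x hx, le_max_left β γ]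
  · rw [abs_of_nonpos hx]
    have := h' (-x) (by linarith)
    simp at this
    linarith [le_max_right β γ]

/-- The averaged potential. -/
noncomputable def avg (Q : Polynomial ℝ) (c r : ℝ) : ℝ :=
  ∫ θ in (0:ℝ)..Real.pi, Q.eval (c + r * Real.cos θ)

lemma cont_param (P : Polynomial ℝ) (k : ℝ → ℝ) (hk : Continuous k) :
    Continuous (fun p : ℝ × ℝ => ∫ θ in (0:ℝ)..Real.pi, P.eval (p.1 + p.2 * Real.cos θ) * k θ) := by
  apply intervalIntegral.continuous_parametric_intervalIntegral_of_continuous'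
  fun_prop

lemma avg_lower (Q : Polynomial ℝ) (β : ℝ) (hβ : ∀ x : ℝ, 16 * |x| - β ≤ Q.eval x)
    (c r : ℝ) : 8 * Real.pi * |c| + 4 * Real.pi * r - Real.pi * β ≤ avg Q c r := by
  have hi : ∀ k : ℝ → ℝ, Continuous k → IntervalIntegrable k volume 0 Real.pi :=
    fun k hk => hk.intervalIntegrable _ _
  have hI : ∀ s : ℝ, (∫ θ in (0:ℝ)..Real.pi, (8 * s * (c + r * Real.cos θ)
      + 8 * ((c + r * Real.cos θ) * Real.cos θ) - β))
      = 8 * Real.pi * (s * c) + 4 * Real.pi * r - Real.pi * β := by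
    intro s
    have : (fun θ => 8 * s * (c + r * Real.cos θ)
      + 8 * ((c + r * Real.cos θ) * Real.cos θ) - β)
      = fun θ => ((8 * s * c - β) + (8 * s * r + 8 * c) * Real.cos θ + (8 * r) * Real.cos θ ^ 2) := by
      funext θ; ring
    rw [this, intervalIntegral.integral_add (hi _ (by fun_prop)) (hi _ (by fun_prop)),
      intervalIntegral.integral_add (hi _ (by fun_prop)) (hi _ (by fun_prop)),
      intervalIntegral.integral_const_mul, intervalIntegral.integral_const_mul,
      integral_cos, integral_cos_sq]
    simp
    ring
  have key : ∀ s : ℝ, |s| ≤ 1 →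
      8 * Real.pi * (s * c) + 4 * Real.pi * r - Real.pi * β ≤ avg Q c r := by
    intro s hs
    rw [← hI s]
    apply intervalIntegral.integral_mono_on Real.pi_pos.le (hi _ (by fun_prop)) (hi _ (by fun_prop))
    intro θ _
    have h1 := hβ (c + r * Real.cos θ)
    set x := c + r * Real.cos θ
    have h2 : s * x ≤ |x| := by
      calc s * x ≤ |s * x| := le_abs_self _
        _ = |s| * |x| := abs_mul _ _
        _ ≤ 1 * |x| := by gcongr
        _ = |x| := one_mul _
    have h3 : x * Real.cos θ ≤ |x| := by
      calc x * Real.cos θ ≤ |x * Real.cos θ| := le_abs_self _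
        _ = |x| * |Real.cos θ| := abs_mul _ _
        _ ≤ |x| * 1 := by gcongr; exact Real.abs_cos_le_one θ
        _ = |x| := mul_one _
    linarith
  rcases abs_cases c with ⟨h, _⟩ | ⟨h, _⟩
  · have := key 1 (by simp)
    rw [h]; linarith
  · have := key (-1) (by simp)
    rw [h]; linarith

lemma tangent (Q : Polynomial ℝ) (hmono : Monotone (fun x : ℝ => Q.derivative.eval x)) (x y : ℝ) :
    Q.eval x - Q.eval y ≤ Q.derivative.eval x * (x - y) := by
  have hc : ConvexOn ℝ Set.univ (fun x => Q.eval x) := by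
    apply Monotone.convexOn_univ_of_deriv Q.differentiable
    have : deriv (fun x => Q.eval x) = fun x => Q.derivative.eval x := by
      funext x; exact Q.deriv
    rw [this]; exact hmono
  have hd := Q.hasDerivAt x
  rcases lt_trichotomy x y with h | h | h
  · have := hc.le_slope_of_hasDerivAt (Set.mem_univ x) (Set.mem_univ y) h hd
    rw [slope_def_field, le_div_iff₀ (by linarith)] at this
    linarith
  · subst h; simp
  · have := hc.slope_le_of_hasDerivAt (Set.mem_univ y) (Set.mem_univ x) h hd
    rw [slope_def_field, div_le_iff₀ (by linarith)] at this
    linarith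

lemma exists_min (Q : Polynomial ℝ) (β : ℝ) (hβ : ∀ x : ℝ, 16 * |x| - β ≤ Q.eval x) :
    ∃ c r : ℝ, 0 < r ∧ ∀ c' r' : ℝ, 0 < r' →
      avg Q c r - 2 * Real.pi * Real.log r ≤ avg Q c' r' - 2 * Real.pi * Real.log r' := by
  have hpi := Real.pi_gt_three
  set M := avg Q 0 1 with hM
  set N := |M| + Real.pi * |β| + 1 with hN
  have hN1 : 1 ≤ N := by have := abs_nonneg M; have := abs_nonneg β; rw [hN]; nlinarith
  have hMN : M + Real.pi * β + 1 ≤ N := by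
    have := le_abs_self M
    have := mul_le_mul_of_nonneg_left (le_abs_self β) Real.pi_pos.le
    linarith
  have hK : IsCompact (Set.Icc (-N) N ×ˢ Set.Icc (Real.exp (-N)) N) := isCompact_Icc.prod isCompact_Icc
  have hcont : Continuous (fun p : ℝ × ℝ => avg Q p.1 p.2) := by
    have := cont_param Q (fun _ => 1) continuous_const
    simpa [avg] using this
  have h01 : ((0:ℝ), (1:ℝ)) ∈ Set.Icc (-N) N ×ˢ Set.Icc (Real.exp (-N)) N := by
    refine ⟨⟨by simp; linarith, by simp; linarith⟩, ⟨?_, hN1⟩⟩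
    simp; linarith
  obtain ⟨⟨c, r⟩, hcr, hmin⟩ := hK.exists_isMinOn (f := fun p : ℝ × ℝ =>
      avg Q p.1 p.2 - 2 * Real.pi * Real.log p.2) ⟨_, h01⟩ (by
    apply hcont.continuousOn.sub
    apply ContinuousOn.mul continuousOn_const
    apply ContinuousOn.log continuousOn_snd
    rintro ⟨x, y⟩ ⟨_, hy⟩
    exact ((Real.exp_pos _).trans_le hy.1).ne')
  refine ⟨c, r, (Real.exp_pos _).trans_le hcr.2.1, fun c' r' hr' => ?_⟩
  by_cases hin : (c', r') ∈ Set.Icc (-N) N ×ˢ Set.Icc (Real.exp (-N)) N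
  · exact hmin hin
  · have h1 := hmin h01
    simp only [Set.mem_ofPred_eq, Real.log_one, mul_zero, sub_zero] at h1
    refine h1.trans ?_
    have h2 := avg_lower Q β hβ c' r'
    have h3 := Real.log_le_sub_one_of_pos hr'
    have h4 := abs_nonneg c'
    have h3' : 2 * Real.pi * Real.log r' ≤ 2 * Real.pi * (r' - 1) := by gcongr
    have hc0 : 0 ≤ Real.pi * |c'| := by positivity
    have hr0 : 0 ≤ Real.pi * r' := by positivity
    by_cases ha : N < |c'|
    · nlinarith
    by_cases hb : N < r'
    · nlinarith
    have hd : r' < Real.exp (-N) := by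
      by_contra hd
      exact hin ⟨abs_le.1 (not_lt.1 ha), not_lt.1 hd, not_lt.1 hb⟩
    have h5 : Real.log r' < -N := by rwa [Real.log_lt_iff_lt_exp hr']
    nlinarith

/-- There is a unique pair `(a₀, b₀)` with `a₀ < b₀`, `φ(a₀,b₀) = 0` and `ψ(a₀,b₀) = 0`. -/
theorem exists_unique_soft_pair (Q : Polynomial ℝ) (m : ℕ) (hm : 1 ≤ m)
    (hdeg : Q.natDegree = 2 * m) (hlead : 0 < Q.leadingCoeff)
    (hconv : ∀ x : ℝ, 0 ≤ Q.derivative.derivative.eval x) :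
    ∃! p : ℝ × ℝ, p.1 < p.2 ∧ phi Q p.1 p.2 = 0 ∧ psi Q p.1 p.2 = 0 := by
  have hi : ∀ k : ℝ → ℝ, Continuous k → IntervalIntegrable k volume 0 Real.pi :=
    fun k hk => hk.intervalIntegrable _ _
  have hstrict := strictMono_deriv Q m hm hdeg hconv
  have hmono := hstrict.monotone
  obtain ⟨β, hβ⟩ := lower Q m hm hdeg hlead
  obtain ⟨c, r, hr, hmin⟩ := exists_min Q β hβ
  set Φ : ℝ → ℝ → ℝ := fun c r => ∫ θ in (0:ℝ)..Real.pi, Q.derivative.eval (c + r * Real.cos θ) with hΦ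
  set H : ℝ → ℝ → ℝ := fun c r => ∫ θ in (0:ℝ)..Real.pi,
    Q.derivative.eval (c + r * Real.cos θ) * Real.cos θ with hH
  have hΦc : Continuous (fun p : ℝ × ℝ => Φ p.1 p.2) := by
    have := cont_param Q.derivative (fun _ => 1) continuous_const
    simpa [hΦ] using this
  have hHc : Continuous (fun p : ℝ × ℝ => H p.1 p.2) :=
    cont_param Q.derivative Real.cos Real.continuous_cos
  have htan : ∀ c' r', avg Q c' r' - avg Q c r ≤ (c' - c) * Φ c' r' + (r' - r) * H c' r' := by
    intro c' r'
    simp only [avg, hΦ, hH]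
    rw [← intervalIntegral.integral_const_mul, ← intervalIntegral.integral_const_mul,
      ← intervalIntegral.integral_add (hi _ (by fun_prop)) (hi _ (by fun_prop)),
      ← intervalIntegral.integral_sub (hi _ (by fun_prop)) (hi _ (by fun_prop))]
    apply intervalIntegral.integral_mono_on Real.pi_pos.le (hi _ (by fun_prop)) (hi _ (by fun_prop))
    intro θ _
    have := tangent Q hmono (c' + r' * Real.cos θ) (c + r * Real.cos θ)
    linarith
  -- stationarity
  have e1 : Φ c r = 0 := by
    have hc1 : Continuous (fun x => Φ x r) := hΦc.comp (by fun_prop : Continuous fun x : ℝ => (x, r))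
    have hx : ∀ x, 0 ≤ (x - c) * Φ x r := by
      intro x
      have h1 := htan x r
      have h2 := hmin x r hr
      simp only [sub_self, zero_mul, add_zero] at h1
      linarith
    apply le_antisymm
    · apply le_of_tendsto (hc1.continuousWithinAt (s := Set.Iio c) (x := c))
      filter_upwards [self_mem_nhdsWithin] with x hxc
      have : x < c := hxc
      have := hx x
      by_contra hcon
      nlinarith [mul_pos (sub_pos.2 hxc) (not_le.1 hcon)]
    · apply ge_of_tendsto (hc1.continuousWithinAt (s := Set.Ioi c) (x := c))
      filter_upwards [self_mem_nhdsWithin] with x hxc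
      exact nonneg_of_mul_nonneg_right (hx x) (sub_pos.2 hxc)
  have e2 : r * H c r = 2 * Real.pi := by
    have hc1 : Continuous (fun x => x * H c x) :=
      continuous_id.mul (hHc.comp (by fun_prop : Continuous fun x : ℝ => (c, x)))
    have hx : ∀ x, 0 < x → 0 ≤ (x - r) * (x * H c x - 2 * Real.pi) := by
      intro x hx0
      have h1 := htan c x
      have h2 := hmin c x hx0
      simp only [sub_self, zero_mul, zero_add] at h1
      have h3 := Real.log_le_sub_one_of_pos (div_pos hr hx0)
      rw [Real.log_div hr.ne' hx0.ne'] at h3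
      have h4 : 2 * Real.pi * (1 - r / x) ≤ (x - r) * H c x := by
        have : 2 * Real.pi * (1 - r / x) ≤ 2 * Real.pi * (Real.log x - Real.log r) := by
          apply mul_le_mul_of_nonneg_left _ (by positivity)
          linarith
        linarith
      have h5 := mul_le_mul_of_nonneg_left h4 hx0.le
      have h6 : x * (2 * Real.pi * (1 - r / x)) = 2 * Real.pi * (x - r) := by field_simp
      rw [h6] at h5
      nlinarith
    apply le_antisymm
    · apply le_of_tendsto (hc1.continuousWithinAt (s := Set.Iio r) (x := r))
      filter_upwards [self_mem_nhdsWithin, nhdsWithin_le_nhds (lt_mem_nhds hr)] with x hxc hx0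
      have := hx x hx0
      by_contra hcon
      nlinarith [mul_pos (sub_pos.2 hxc) (sub_pos.2 (not_le.1 hcon))]
    · apply ge_of_tendsto (hc1.continuousWithinAt (s := Set.Ioi r) (x := r))
      filter_upwards [self_mem_nhdsWithin] with x hxc
      have : r < x := hxc
      exact sub_nonneg.1 (nonneg_of_mul_nonneg_right (hx x (hr.trans this)) (sub_pos.2 hxc))
  refine ⟨(c - r, c + r), ⟨by dsimp only; linarith, ?_, ?_⟩, ?_⟩
  · rw [phi_eq]; exact e1
  · rw [psi_eq, phi_eq]
    change r * Φ c r + r * H c r - 2 * Real.pi = 0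
    rw [e1, e2]; ring
  · rintro ⟨a, b⟩ ⟨hab, h1, h2⟩
    dsimp only at hab h1 h2
    obtain ⟨c', hc'⟩ : ∃ c', c' = (a + b) / 2 := ⟨_, rfl⟩
    obtain ⟨r', hr'⟩ : ∃ r', r' = (b - a) / 2 := ⟨_, rfl⟩
    have ha' : a = c' - r' := by rw [hc', hr']; ring
    have hb' : b = c' + r' := by rw [hc', hr']; ring
    clear hc' hr'
    subst ha' hb'
    have hr0 : 0 < r' := by linarith
    rw [psi_eq, h1] at h2
    rw [phi_eq] at h1
    change Φ c' r' = 0 at h1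
    change r' * 0 + r' * H c' r' - 2 * Real.pi = 0 at h2
    have hint : ∫ θ in (0:ℝ)..Real.pi, (Q.derivative.eval (c' + r' * Real.cos θ)
        - Q.derivative.eval (c + r * Real.cos θ)) * ((c' + r' * Real.cos θ) - (c + r * Real.cos θ))
        = (c' - c) * (Φ c' r' - Φ c r) + (r' - r) * (H c' r' - H c r) := by
      simp only [hΦ, hH]
      rw [← intervalIntegral.integral_sub (hi _ (by fun_prop)) (hi _ (by fun_prop)),
        ← intervalIntegral.integral_sub (hi _ (by fun_prop)) (hi _ (by fun_prop)),
        ← intervalIntegral.integral_const_mul, ← intervalIntegral.integral_const_mul,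
        ← intervalIntegral.integral_add (hi _ (by fun_prop)) (hi _ (by fun_prop))]
      congr 1
      funext θ
      ring
    have hnn : ∀ x y : ℝ, 0 ≤ (Q.derivative.eval x - Q.derivative.eval y) * (x - y) := by
      intro x y
      rcases le_total x y with h | h
      · exact mul_nonneg_of_nonpos_of_nonpos (sub_nonpos.2 (hmono h)) (sub_nonpos.2 h)
      · exact mul_nonneg (sub_nonneg.2 (hmono h)) (sub_nonneg.2 h)
    have hge := intervalIntegral.integral_nonneg (μ := volume) Real.pi_pos.le (fun θ _ =>
      hnn (c' + r' * Real.cos θ) (c + r * Real.cos θ))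
    have hH1 : H c r = 2 * Real.pi / r := by rw [← e2]; field_simp
    have hH2 : H c' r' = 2 * Real.pi / r' := by
      rw [eq_div_iff hr0.ne']; linarith
    have hrr : r' = r := by
      rw [hint, h1, e1, hH1, hH2] at hge
      have : (c' - c) * (0 - 0) + (r' - r) * (2 * Real.pi / r' - 2 * Real.pi / r)
          = - (2 * Real.pi * (r' - r) ^ 2 / (r * r')) := by field_simp; ring
      rw [this] at hge
      by_contra hne
      have : 0 < (r' - r) ^ 2 := by have := sub_ne_zero.2 hne; positivity
      have : 0 < 2 * Real.pi * (r' - r) ^ 2 / (r * r') := by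
        have := Real.pi_pos
        positivity
      linarith
    subst hrr
    have hcc : c' = c := by
      have hlt : ∀ x y, x < y → Φ x r' < Φ y r' := by
        intro x y hxy
        apply intervalIntegral.integral_lt_integral_of_continuousOn_of_le_of_exists_lt Real.pi_pos
          (by fun_prop) (by fun_prop)
        · intro θ _
          exact hmono (by linarith)
        · exact ⟨0, ⟨le_rfl, Real.pi_pos.le⟩, hstrict (by linarith)⟩
      rcases lt_trichotomy c' c with h | h | h
      · have := hlt _ _ h; linarith
      · exact h
      · have := hlt _ _ h; linarith
    rw [hcc]
end

section
/- Let Q be as in the context and let a < b be real numbers with ψ(a,b) = 0. Define p(x) = (1/(2π)) · ∫_a^b D(x,t) · √((t−a)/(b−t)) dt + (1/2)·Q'(x). Then (1/π) · ∫_a^b p(x) · √((b−x)/(x−a)) dx = 1; that is, the measure with density h(x) = (1/π)·p(x)·√((b−x)/(x−a)) on [a,b] has total mass 1. -/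
open MeasureTheory intervalIntegral

/-- The divided difference `D(x,t) = (Q'(x) − Q'(t))/(x − t)` for `t ≠ x`, `D(x,x) = Q''(x)`. -/
noncomputable def divDiff (Q : Polynomial ℝ) (x t : ℝ) : ℝ :=
  if x = t then Q.derivative.derivative.eval x
  else (Q.derivative.eval x - Q.derivative.eval t) / (x - t)

/-- `p(x) = (1/(2π)) ∫_a^b D(x,t)·√((t−a)/(b−t)) dt + (1/2)·Q'(x)`. -/
noncomputable def pFun (Q : Polynomial ℝ) (a b x : ℝ) : ℝ :=
  (1 / (2 * Real.pi)) * (∫ t in a..b, divDiff Q x t * Real.sqrt ((t - a) / (b - t)))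
    + (1 / 2) * Q.derivative.eval x

/-- Moments of the arcsine weight. -/
noncomputable def cm (n : ℕ) : ℝ := ∫ θ in (0:ℝ)..Real.pi, Real.cos θ ^ n

lemma cm_zero : cm 0 = Real.pi := by simp [cm]

lemma cm_one : cm 1 = 0 := by simp [cm]

lemma cm_rec (n : ℕ) : ((n:ℝ) + 2) * cm (n + 2) = (n + 1) * cm n := by
  unfold cm
  rw [integral_cos_pow]
  have : (n:ℝ) + 2 ≠ 0 := by positivity
  simp
  field_simp

lemma S_rec (n : ℕ) : ∑ p ∈ Finset.HasAntidiagonal.antidiagonal (n + 2), cm p.1 * cm p.2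
    = ∑ p ∈ Finset.HasAntidiagonal.antidiagonal n, cm p.1 * cm p.2 := by
  have key : ∀ k : ℕ, ∀ e : ℝ, ((k:ℝ) + 2 * e) * ∑ p ∈ Finset.HasAntidiagonal.antidiagonal k, cm p.1 * cm p.2
      = 2 * ∑ p ∈ Finset.HasAntidiagonal.antidiagonal k, ((p.1:ℝ) + e) * (cm p.1 * cm p.2) := by
    intro k e
    have h1 : ∑ p ∈ Finset.HasAntidiagonal.antidiagonal k, ((p.1:ℝ) + e) * (cm p.1 * cm p.2)
        = ∑ p ∈ Finset.HasAntidiagonal.antidiagonal k, ((p.2:ℝ) + e) * (cm p.1 * cm p.2) := by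
      rw [← Finset.Nat.sum_antidiagonal_swap]
      refine Finset.sum_congr rfl fun p _ => ?_
      simp only [Prod.fst_swap, Prod.snd_swap]
      ring
    rw [two_mul (Finset.sum _ _)]
    nth_rewrite 2 [h1]
    rw [← Finset.sum_add_distrib, Finset.mul_sum]
    refine Finset.sum_congr rfl fun p hp => ?_
    rw [Finset.HasAntidiagonal.mem_antidiagonal] at hp
    rw [← hp]
    push_cast
    ring
  have h2 := key (n + 2) 0
  have h3 := key n 1
  have h4 : ∑ p ∈ Finset.HasAntidiagonal.antidiagonal (n + 2), ((p.1:ℝ) + 0) * (cm p.1 * cm p.2)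
      = ∑ p ∈ Finset.HasAntidiagonal.antidiagonal n, ((p.1:ℝ) + 1) * (cm p.1 * cm p.2) := by
    rw [Finset.Nat.sum_antidiagonal_succ, Finset.Nat.sum_antidiagonal_succ]
    simp only [Nat.cast_zero, zero_add, cm_one, add_zero, zero_mul, mul_zero]
    refine Finset.sum_congr rfl fun p hp => ?_
    have := cm_rec p.1
    push_cast
    rw [← mul_assoc, ← mul_assoc, ← this]
    ring_nf
  rw [h4, ← h3] at h2
  have : (n:ℝ) + 2 ≠ 0 := by positivity
  apply mul_left_cancel₀ this
  push_cast at h2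
  linarith

lemma mM (n : ℕ) : ∑ p ∈ Finset.HasAntidiagonal.antidiagonal n,
    (cm p.1 - cm (p.1 + 1)) * (cm p.2 + cm (p.2 + 1)) = 2 * Real.pi * cm (n + 2) := by
  have hS := S_rec n
  rw [Finset.Nat.sum_antidiagonal_succ, Finset.Nat.sum_antidiagonal_succ'] at hS
  simp only [cm_zero] at hS
  have hsw : ∑ p ∈ Finset.HasAntidiagonal.antidiagonal n, cm (p.1 + 1) * cm p.2
      = ∑ p ∈ Finset.HasAntidiagonal.antidiagonal n, cm p.1 * cm (p.2 + 1) := by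
    rw [← Finset.Nat.sum_antidiagonal_swap]
    refine Finset.sum_congr rfl fun p _ => ?_
    simp only [Prod.fst_swap, Prod.snd_swap]
    ring
  have : ∑ p ∈ Finset.HasAntidiagonal.antidiagonal n, (cm p.1 - cm (p.1 + 1)) * (cm p.2 + cm (p.2 + 1))
      = ∑ p ∈ Finset.HasAntidiagonal.antidiagonal n, cm p.1 * cm p.2
        + ∑ p ∈ Finset.HasAntidiagonal.antidiagonal n, cm p.1 * cm (p.2 + 1)
        - ∑ p ∈ Finset.HasAntidiagonal.antidiagonal n, cm (p.1 + 1) * cm p.2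
        - ∑ p ∈ Finset.HasAntidiagonal.antidiagonal n, cm (p.1 + 1) * cm (p.2 + 1) := by
    rw [← Finset.sum_add_distrib, ← Finset.sum_sub_distrib, ← Finset.sum_sub_distrib]
    refine Finset.sum_congr rfl fun p _ => ?_
    ring
  rw [this, hsw]
  simp only [zero_add, add_assoc, Nat.reduceAdd] at hS
  linarith

lemma mM' (n : ℕ) : ∑ i ∈ Finset.range n,
    (cm i - cm (i + 1)) * (cm (n - 1 - i) + cm (n - 1 - i + 1))
      = Real.pi * ((cm n + cm (n + 1)) - (cm n - cm (n + 1))) := by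
  cases n with
  | zero => simp [cm_one]
  | succ n =>
    have := mM n
    rw [Finset.Nat.sum_antidiagonal_eq_sum_range_succ_mk] at this
    simp only [Nat.add_sub_cancel]
    simp only [Nat.succ_eq_add_one] at this
    rw [this]
    ring

lemma cov_aux (c r : ℝ) (hr : 0 < r) (g : ℝ → ℝ) :
    ∫ x in (c - r)..(c + r), g x
      = ∫ θ in (0:ℝ)..Real.pi, r * Real.sin θ * g (c + r * Real.cos θ) := by
  rw [intervalIntegral.integral_of_le (by linarith), intervalIntegral.integral_of_le Real.pi_pos.le,
    integral_Ioc_eq_integral_Ioo, integral_Ioc_eq_integral_Ioo]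
  have himg : (fun θ => c + r * Real.cos θ) '' Set.Ioo 0 Real.pi = Set.Ioo (c - r) (c + r) := by
    ext x
    constructor
    · rintro ⟨θ, hθ, rfl⟩
      have h1 : Real.cos θ < 1 := by
        have := Real.strictAntiOn_cos (Set.left_mem_Icc.2 Real.pi_pos.le) (Set.Ioo_subset_Icc_self hθ) hθ.1
        simpa using this
      have h2 : -1 < Real.cos θ := by
        have := Real.strictAntiOn_cos (Set.Ioo_subset_Icc_self hθ) (Set.right_mem_Icc.2 Real.pi_pos.le) hθ.2
        simpa using this
      constructor <;> simp only <;> nlinarith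
    · rintro ⟨h1, h2⟩
      have h3 : -1 < (x - c) / r := by rw [lt_div_iff₀ hr]; linarith
      have h4 : (x - c) / r < 1 := by rw [div_lt_iff₀ hr]; linarith
      refine ⟨Real.arccos ((x - c) / r), ⟨Real.arccos_pos.2 h4, ?_⟩, ?_⟩
      · refine lt_of_le_of_ne (Real.arccos_le_pi _) fun h => ?_
        rw [Real.arccos_eq_pi] at h
        linarith
      · simp only
        rw [Real.cos_arccos h3.le h4.le]
        field_simp
        ring
  have hinj : Set.InjOn (fun θ => c + r * Real.cos θ) (Set.Ioo 0 Real.pi) := by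
    intro x hx y hy h
    simp only [add_right_inj, mul_eq_mul_left_iff, hr.ne', or_false] at h
    exact Real.injOn_cos (Set.Ioo_subset_Icc_self hx) (Set.Ioo_subset_Icc_self hy) h
  have := integral_image_eq_integral_abs_deriv_smul (f := fun θ => c + r * Real.cos θ)
    (f' := fun θ => r * (- Real.sin θ)) measurableSet_Ioo
    (fun x _ => (((Real.hasDerivAt_cos x).const_mul r).const_add c).hasDerivWithinAt) hinj g
  rw [himg] at this
  rw [this]
  refine setIntegral_congr_fun measurableSet_Ioo fun θ hθ => ?_
  have := Real.sin_pos_of_pos_of_lt_pi hθ.1 hθ.2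
  simp only [smul_eq_mul]
  rw [mul_neg, abs_neg, abs_of_pos (by positivity)]

lemma sin_sqrt (θ : ℝ) (h : θ ∈ Set.Ioo 0 Real.pi) :
    Real.sin θ * Real.sqrt ((1 - Real.cos θ) / (1 + Real.cos θ)) = 1 - Real.cos θ
    ∧ Real.sin θ * Real.sqrt ((1 + Real.cos θ) / (1 - Real.cos θ)) = 1 + Real.cos θ := by
  have hs := Real.sin_pos_of_pos_of_lt_pi h.1 h.2
  have hsc := Real.sin_sq_add_cos_sq θ
  have h1 : 0 < 1 - Real.cos θ := by nlinarith [Real.cos_le_one θ, Real.neg_one_le_cos θ]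
  have h2 : 0 < 1 + Real.cos θ := by nlinarith [Real.cos_le_one θ, Real.neg_one_le_cos θ]
  have e1 : (1 - Real.cos θ) / (1 + Real.cos θ) = ((1 - Real.cos θ) / Real.sin θ) ^ 2 := by
    field_simp
    nlinarith
  have e2 : (1 + Real.cos θ) / (1 - Real.cos θ) = ((1 + Real.cos θ) / Real.sin θ) ^ 2 := by
    field_simp
    nlinarith
  rw [e1, e2, Real.sqrt_sq (by positivity), Real.sqrt_sq (by positivity)]
  constructor <;> field_simp

lemma intcongr {f g : ℝ → ℝ} (h : ∀ θ ∈ Set.Ioo 0 Real.pi, f θ = g θ) :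
    ∫ θ in (0:ℝ)..Real.pi, f θ = ∫ θ in (0:ℝ)..Real.pi, g θ := by
  rw [intervalIntegral.integral_of_le Real.pi_pos.le, intervalIntegral.integral_of_le Real.pi_pos.le,
    integral_Ioc_eq_integral_Ioo, integral_Ioc_eq_integral_Ioo]
  exact setIntegral_congr_fun measurableSet_Ioo h

lemma cov2 (c r : ℝ) (hr : 0 < r) (f : ℝ → ℝ) :
    ∫ x in (c - r)..(c + r), f x * Real.sqrt (((c + r) - x) / (x - (c - r)))
      = ∫ θ in (0:ℝ)..Real.pi, r * f (c + r * Real.cos θ) * (1 - Real.cos θ) := by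
  rw [cov_aux c r hr]
  refine intcongr fun θ hθ => ?_
  rw [← (sin_sqrt θ hθ).1]
  have : (c + r - (c + r * Real.cos θ)) / (c + r * Real.cos θ - (c - r))
      = (1 - Real.cos θ) / (1 + Real.cos θ) := by
    rw [← mul_div_mul_left (_ : ℝ) (1 + Real.cos θ) hr.ne']
    congr 1 <;> ring
  rw [this]
  ring

lemma cov1 (c r : ℝ) (hr : 0 < r) (f : ℝ → ℝ) :
    ∫ x in (c - r)..(c + r), f x * Real.sqrt ((x - (c - r)) / ((c + r) - x))
      = ∫ θ in (0:ℝ)..Real.pi, r * f (c + r * Real.cos θ) * (1 + Real.cos θ) := by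
  rw [cov_aux c r hr]
  refine intcongr fun θ hθ => ?_
  rw [← (sin_sqrt θ hθ).2]
  have : (c + r * Real.cos θ - (c - r)) / (c + r - (c + r * Real.cos θ))
      = (1 + Real.cos θ) / (1 - Real.cos θ) := by
    rw [← mul_div_mul_left (_ : ℝ) (1 - Real.cos θ) hr.ne']
    congr 1 <;> ring
  rw [this]
  ring

lemma mom2 (n : ℕ) : ∫ θ in (0:ℝ)..Real.pi, Real.cos θ ^ n * (1 - Real.cos θ)
    = cm n - cm (n + 1) := by
  unfold cm
  rw [← intervalIntegral.integral_sub (by apply Continuous.intervalIntegrable; fun_prop)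
    (by apply Continuous.intervalIntegrable; fun_prop)]
  congr 1; ext θ; ring

lemma mom1 (n : ℕ) : ∫ θ in (0:ℝ)..Real.pi, Real.cos θ ^ n * (1 + Real.cos θ)
    = cm n + cm (n + 1) := by
  unfold cm
  rw [← intervalIntegral.integral_add (by apply Continuous.intervalIntegrable; fun_prop)
    (by apply Continuous.intervalIntegrable; fun_prop)]
  congr 1; ext θ; ring

/-- Sum over a finite family of powers against the two weights. -/
lemma sum2 (s : Finset ℕ) (k : ℕ → ℝ) :
    ∫ θ in (0:ℝ)..Real.pi, (∑ n ∈ s, k n * Real.cos θ ^ n) * (1 - Real.cos θ)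
    = ∑ n ∈ s, k n * (cm n - cm (n + 1)) := by
  simp_rw [Finset.sum_mul, mul_assoc]
  rw [intervalIntegral.integral_finsetSum
    (fun i _ => by apply Continuous.intervalIntegrable; fun_prop)]
  simp_rw [intervalIntegral.integral_const_mul, mom2]

lemma sum1 (s : Finset ℕ) (k : ℕ → ℝ) :
    ∫ θ in (0:ℝ)..Real.pi, (∑ n ∈ s, k n * Real.cos θ ^ n) * (1 + Real.cos θ)
    = ∑ n ∈ s, k n * (cm n + cm (n + 1)) := by
  simp_rw [Finset.sum_mul, mul_assoc]
  rw [intervalIntegral.integral_finsetSum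
    (fun i _ => by apply Continuous.intervalIntegrable; fun_prop)]
  simp_rw [intervalIntegral.integral_const_mul, mom1]

lemma divDiff_eq (Q P : Polynomial ℝ) (c r : ℝ) (hr : 0 < r)
    (hP : P = Q.derivative.comp (Polynomial.C c + Polynomial.C r * Polynomial.X)) (u v : ℝ) :
    r * divDiff Q (c + r * u) (c + r * v)
      = ∑ n ∈ Finset.range (P.natDegree + 1), P.coeff n *
          ∑ i ∈ Finset.range n, u ^ i * v ^ (n - 1 - i) := by
  have hev : ∀ x, Q.derivative.eval (c + r * x) = P.eval x := by
    intro x; rw [hP]; simp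
  unfold divDiff
  split_ifs with h
  · have huv : u = v := by simpa [hr.ne'] using h
    subst huv
    have hd : P.derivative.eval u = r * Q.derivative.derivative.eval (c + r * u) := by
      rw [hP, Polynomial.derivative_comp]; simp
    rw [← hd, Polynomial.derivative_eval, Polynomial.sum_over_range]
    · refine Finset.sum_congr rfl fun n _ => ?_
      rw [Finset.sum_congr rfl (g := fun _ => u ^ (n - 1))]
      · simp; ring
      · intro i hi
        rw [Finset.mem_range] at hi
        rw [← pow_add]
        congr 1; omega
    · simp
  · have huv : u - v ≠ 0 := by
      intro h'; apply h; rw [sub_eq_zero.1 h']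
    rw [hev, hev]
    have : c + r * u - (c + r * v) = r * (u - v) := by ring
    rw [this, ← mul_div_assoc, mul_div_mul_left _ _ hr.ne', div_eq_iff huv, Finset.sum_mul]
    simp_rw [mul_assoc, geom_sum₂_mul]
    rw [Polynomial.eval_eq_sum_range, Polynomial.eval_eq_sum_range, ← Finset.sum_sub_distrib]
    refine Finset.sum_congr rfl fun n _ => ?_
    ring

/-- If `ψ(a,b) = 0`, then the density `h(x) = (1/π)·p(x)·√((b−x)/(x−a))` on `[a,b]`
has total mass `1`. -/
theorem pFun_density_mass_one (Q : Polynomial ℝ) (m : ℕ) (hm : 1 ≤ m)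
    (hdeg : Q.natDegree = 2 * m) (hlead : 0 < Q.leadingCoeff)
    (hconv : ∀ x : ℝ, 0 ≤ Q.derivative.derivative.eval x)
    (a b : ℝ) (hab : a < b) (hpsi : psi Q a b = 0) :
    (1 / Real.pi) * (∫ x in a..b, pFun Q a b x * Real.sqrt ((b - x) / (x - a))) = 1 := by
  obtain ⟨c, r, rfl, rfl⟩ : ∃ c r, a = c - r ∧ b = c + r :=
    ⟨(a + b) / 2, (b - a) / 2, by ring, by ring⟩
  have hr : 0 < r := by linarith
  have hpi := Real.pi_pos
  obtain ⟨P, hP⟩ : ∃ P, P = Q.derivative.comp (Polynomial.C c + Polynomial.C r * Polynomial.X) :=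
    ⟨_, rfl⟩
  have hev : ∀ x, Q.derivative.eval (c + r * x) = P.eval x := by
    intro x; rw [hP]; simp
  -- the constraint
  have hcon : r * ∑ n ∈ Finset.range (P.natDegree + 1), P.coeff n * (cm n + cm (n + 1))
      = 2 * Real.pi := by
    have h := cov2 (1/2) (1/2) (by norm_num)
      (fun t => Q.derivative.eval ((1 - t) * (c + r) + t * (c - r)))
    norm_num at h
    unfold psi at hpsi
    rw [h] at hpsi
    have h2 := intervalIntegral.integral_comp_sub_left (a := 0) (b := Real.pi)
      (fun θ => P.eval (Real.cos θ) * (1 + Real.cos θ)) Real.pi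
    simp only [sub_self, sub_zero] at h2
    have h3 : ∀ θ : ℝ, 2⁻¹ * Q.derivative.eval ((1 - (2⁻¹ + 2⁻¹ * Real.cos θ)) * (c + r)
        + (2⁻¹ + 2⁻¹ * Real.cos θ) * (c - r)) * (1 - Real.cos θ)
        = 2⁻¹ * (P.eval (Real.cos (Real.pi - θ)) * (1 + Real.cos (Real.pi - θ))) := by
      intro θ
      rw [← hev, Real.cos_pi_sub]
      ring_nf
    norm_num at hpsi h3
    simp_rw [h3] at hpsi
    have h2' := h2
    simp only [Real.cos_pi_sub] at h2'
    rw [intervalIntegral.integral_const_mul, h2'] at hpsi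
    simp_rw [Polynomial.eval_eq_sum_range] at hpsi
    rw [sum1] at hpsi
    linarith
  have hp : ∀ u, pFun Q (c - r) (c + r) (c + r * u)
      = 1 / (2 * Real.pi) * (∑ n ∈ Finset.range (P.natDegree + 1), P.coeff n *
          ∑ i ∈ Finset.range n, u ^ i * (cm (n - 1 - i) + cm (n - 1 - i + 1)))
        + 1 / 2 * P.eval u := by
    intro u
    unfold pFun
    rw [hev, cov1 c r hr (divDiff Q (c + r * u))]
    simp_rw [divDiff_eq Q P c r hr hP, Finset.sum_mul, Finset.mul_sum, Finset.sum_mul, mul_assoc]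
    rw [intervalIntegral.integral_finsetSum
      (fun i _ => by apply Continuous.intervalIntegrable; fun_prop), Finset.mul_sum]
    congr 1
    refine Finset.sum_congr rfl fun n _ => ?_
    rw [intervalIntegral.integral_finsetSum
      (fun i _ => by apply Continuous.intervalIntegrable; fun_prop), Finset.mul_sum]
    refine Finset.sum_congr rfl fun i _ => ?_
    rw [intervalIntegral.integral_const_mul, intervalIntegral.integral_const_mul, mom1]
  rw [cov2 c r hr]
  simp_rw [hp]
  have hsplit : ∀ θ : ℝ, r * (1 / (2 * Real.pi) * (∑ n ∈ Finset.range (P.natDegree + 1), P.coeff n *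
          ∑ i ∈ Finset.range n, Real.cos θ ^ i * (cm (n - 1 - i) + cm (n - 1 - i + 1)))
        + 1 / 2 * P.eval (Real.cos θ)) * (1 - Real.cos θ)
      = r * (∑ n ∈ Finset.range (P.natDegree + 1), P.coeff n *
        (1 / (2 * Real.pi) * ((∑ i ∈ Finset.range n, (cm (n - 1 - i) + cm (n - 1 - i + 1))
            * Real.cos θ ^ i) * (1 - Real.cos θ))
          + 1 / 2 * (Real.cos θ ^ n * (1 - Real.cos θ)))) := by
    intro θ
    rw [Polynomial.eval_eq_sum_range, mul_assoc]
    congr 1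
    rw [Finset.mul_sum, Finset.mul_sum, ← Finset.sum_add_distrib, Finset.sum_mul]
    refine Finset.sum_congr rfl fun n _ => ?_
    simp_rw [mul_comm (Real.cos θ ^ _) (cm _ + cm _)]
    ring
  simp_rw [hsplit]
  rw [intervalIntegral.integral_const_mul, intervalIntegral.integral_finsetSum
      (fun i _ => by apply Continuous.intervalIntegrable; fun_prop)]
  have hterm : ∀ n, ∫ θ in (0:ℝ)..Real.pi, P.coeff n *
        (1 / (2 * Real.pi) * ((∑ i ∈ Finset.range n, (cm (n - 1 - i) + cm (n - 1 - i + 1))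
            * Real.cos θ ^ i) * (1 - Real.cos θ))
          + 1 / 2 * (Real.cos θ ^ n * (1 - Real.cos θ)))
      = 1 / 2 * (P.coeff n * (cm n + cm (n + 1))) := by
    intro n
    rw [intervalIntegral.integral_const_mul, intervalIntegral.integral_add
      (by apply Continuous.intervalIntegrable; fun_prop)
      (by apply Continuous.intervalIntegrable; fun_prop), intervalIntegral.integral_const_mul,
      intervalIntegral.integral_const_mul, sum2, mom2]
    have := mM' n
    simp_rw [mul_comm (cm _ - cm _) (cm _ + cm _)] at this
    rw [this]
    field_simp
    ring
  simp_rw [hterm]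
  rw [← Finset.mul_sum, mul_left_comm r, hcon]
  field_simp
end

section
/- Let σ and τ be real numbers with −√2 ≤ σ < τ ≤ √2. Define h(x) = (1/π) · ((τ−σ)²/8 + 1 + x·(σ+τ)/2 − x²) / √((τ−x)(x−σ)) for x ∈ (σ,τ). Then h(x) ≥ 0 for every x ∈ (σ,τ), and ∫_σ^τ h(x) dx = 1. -/
open MeasureTheory intervalIntegral

/-- Antiderivative of the density. -/
theorem gaussian_aux_deriv (σ τ x : ℝ) (h1 : σ < x) (h2 : x < τ) :
    HasDerivAt (fun x : ℝ => (1 / Real.pi) * (Real.arcsin ((2 * x - (σ + τ)) / (τ - σ)) +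
      (x / 2 + (σ + τ) / 4) * Real.sqrt ((τ - x) * (x - σ))))
      ((1 / Real.pi) * (((τ - σ) ^ 2 / 8 + 1 + x * (σ + τ) / 2 - x ^ 2) /
          Real.sqrt ((τ - x) * (x - σ)))) x := by
  have hr : 0 < τ - σ := by linarith
  have hq : 0 < (τ - x) * (x - σ) := mul_pos (by linarith) (by linarith)
  have hs : 0 < Real.sqrt ((τ - x) * (x - σ)) := Real.sqrt_pos.2 hq
  have hss : Real.sqrt ((τ - x) * (x - σ)) ^ 2 = (τ - x) * (x - σ) := Real.sq_sqrt hq.le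
  have hid := hasDerivAt_id' x
  have hu : HasDerivAt (fun x : ℝ => (2 * x - (σ + τ)) / (τ - σ)) (2 / (τ - σ)) x := by
    simpa using ((hid.const_mul 2).sub_const (σ + τ)).div_const (τ - σ)
  have hl : HasDerivAt (fun x : ℝ => x / 2 + (σ + τ) / 4) (1 / 2) x := by
    simpa using (hid.div_const 2).add_const ((σ + τ) / 4)
  have hp : HasDerivAt (fun x : ℝ => (τ - x) * (x - σ)) (-1 * (x - σ) + (τ - x) * 1) x :=
    (hid.const_sub τ).mul (hid.sub_const σ)
  have hsq := hp.sqrt hq.ne'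
  have n1 : (2 * x - (σ + τ)) / (τ - σ) ≠ -1 := by
    intro h
    rw [div_eq_iff hr.ne'] at h
    linarith
  have n2 : (2 * x - (σ + τ)) / (τ - σ) ≠ 1 := by
    intro h
    rw [div_eq_iff hr.ne'] at h
    linarith
  have ha := (Real.hasDerivAt_arcsin n1 n2).comp x hu
  have e : Real.sqrt (1 - ((2 * x - (σ + τ)) / (τ - σ)) ^ 2)
      = 2 * Real.sqrt ((τ - x) * (x - σ)) / (τ - σ) := by
    rw [Real.sqrt_eq_iff_eq_sq]
    · rw [div_pow, div_pow, mul_pow, hss]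
      field_simp
      ring
    · have : 1 - ((2 * x - (σ + τ)) / (τ - σ)) ^ 2
          = (4 * ((τ - x) * (x - σ))) / (τ - σ) ^ 2 := by
        field_simp
        ring
      rw [this]
      positivity
    · positivity
  rw [e] at ha
  have hG := (ha.add (hl.mul hsq)).const_mul (1 / Real.pi)
  refine hG.congr_deriv ?_
  congr 1
  generalize Real.sqrt ((τ - x) * (x - σ)) = s at hs hss
  field_simp
  rw [hss]
  ring

theorem gaussian_two_hard_edges (σ τ : ℝ) (hσ : -Real.sqrt 2 ≤ σ) (hστ : σ < τ)
    (hτ : τ ≤ Real.sqrt 2) :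
    (∀ x ∈ Set.Ioo σ τ,
        0 ≤ (1 / Real.pi) * (((τ - σ) ^ 2 / 8 + 1 + x * (σ + τ) / 2 - x ^ 2) /
          Real.sqrt ((τ - x) * (x - σ)))) ∧
      (∫ x in σ..τ, (1 / Real.pi) * (((τ - σ) ^ 2 / 8 + 1 + x * (σ + τ) / 2 - x ^ 2) /
          Real.sqrt ((τ - x) * (x - σ)))) = 1 := by
  have h2 : Real.sqrt 2 ^ 2 = 2 := Real.sq_sqrt (by norm_num)
  have hpos : ∀ x ∈ Set.Ioo σ τ,
        0 ≤ (1 / Real.pi) * (((τ - σ) ^ 2 / 8 + 1 + x * (σ + τ) / 2 - x ^ 2) /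
          Real.sqrt ((τ - x) * (x - σ))) := by
    rintro x ⟨hx1, hx2⟩
    have hN : 0 ≤ (τ - σ) ^ 2 / 8 + 1 + x * (σ + τ) / 2 - x ^ 2 := by
      -- endpoint values
      have s2 : 0 ≤ Real.sqrt 2 := Real.sqrt_nonneg 2
      have A : 0 ≤ (τ - σ) ^ 2 / 8 + 1 + τ * (σ + τ) / 2 - τ ^ 2 := by
        have : τ ^ 2 ≤ 2 := by nlinarith
        nlinarith [sq_nonneg (σ + τ)]
      have B : 0 ≤ (τ - σ) ^ 2 / 8 + 1 + σ * (σ + τ) / 2 - σ ^ 2 := by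
        have : σ ^ 2 ≤ 2 := by nlinarith
        nlinarith [sq_nonneg (σ + τ)]
      have hr : 0 < τ - σ := by linarith
      have C : (τ - σ) * ((τ - σ) ^ 2 / 8 + 1 + x * (σ + τ) / 2 - x ^ 2)
        = (x - σ) * ((τ - σ) ^ 2 / 8 + 1 + τ * (σ + τ) / 2 - τ ^ 2)
          + (τ - x) * ((τ - σ) ^ 2 / 8 + 1 + σ * (σ + τ) / 2 - σ ^ 2)
          + (τ - σ) * ((x - σ) * (τ - x)) := by ring
      have a1 : 0 ≤ x - σ := by linarith
      have a2 : 0 ≤ τ - x := by linarith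
      refine nonneg_of_mul_nonneg_right ?_ hr
      rw [C]
      have := mul_nonneg a1 A
      have := mul_nonneg a2 B
      have := mul_nonneg hr.le (mul_nonneg a1 a2)
      linarith
    have := Real.pi_pos
    positivity
  refine ⟨hpos, ?_⟩
  have hc : Continuous (fun x : ℝ => (1 / Real.pi) *
      (Real.arcsin ((2 * x - (σ + τ)) / (τ - σ)) +
      (x / 2 + (σ + τ) / 4) * Real.sqrt ((τ - x) * (x - σ)))) := by
    have := Real.continuous_arcsin
    fun_prop
  have hd := fun x (hx : x ∈ Set.Ioo σ τ) => gaussian_aux_deriv σ τ x hx.1 hx.2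
  have hi := integrableOn_deriv_of_nonneg hc.continuousOn hd hpos
  rw [integral_eq_sub_of_hasDerivAt_of_le hστ.le hc.continuousOn hd
    ((intervalIntegrable_iff_integrableOn_Ioc_of_le hστ.le).2 hi)]
  have hr : τ - σ ≠ 0 := by linarith
  have e1 : (2 * τ - (σ + τ)) / (τ - σ) = 1 := by
    rw [div_eq_iff hr]; ring
  have e2 : (2 * σ - (σ + τ)) / (τ - σ) = -1 := by
    rw [div_eq_iff hr]; ring
  simp only [e1, e2, sub_self, zero_mul, mul_zero, Real.sqrt_zero, add_zero,
    Real.arcsin_one, Real.arcsin_neg_one]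
  field_simp
  norm_num
end
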